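/- arXiv:2506.07868 — 9 statements merged into one kernel-verified Lean document; each statement's English description precedes it below -/
import Mathlib

section
/- Let ε > 0, let Δ be a positive integer, set s = Δ/ε, and let ℓ ≤ u be integers. For all integers μ and μ′ with ℓ ≤ μ ≤ u, ℓ ≤ μ′ ≤ u and |μ − μ′| ≤ Δ, and for every set S ⊆ ℤ, the censored discrete Laplace random variables Y ~ CensoredDiscreteLaplace(μ, s, ℓ, u) and Y′ ~ CensoredDiscreteLaplace(μ′, s, ℓ, u) satisfy Pr[Y ∈ S] ≤ e^ε · Pr[Y′ ∈ S]. In other words, the censored discrete Laplace mechanism applied to an integer-valued statistic of global sensitivity Δ is ε-differentially private. -/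
/-- Probability mass function of the discrete Laplace distribution with shift `μ` and scale `s`. -/
noncomputable def dLapPMF (μ : ℤ) (s : ℝ) (x : ℤ) : ℝ :=
  ((Real.exp (1/s) - 1) / (Real.exp (1/s) + 1)) * Real.exp (-|(x : ℝ) - (μ : ℝ)| / s)

/-- Cumulative distribution function of the discrete Laplace distribution. -/
noncomputable def dLapCDF (μ : ℤ) (s : ℝ) (x : ℤ) : ℝ :=
  if x ≤ μ then (Real.exp (1/s) / (Real.exp (1/s) + 1)) * Real.exp (-((μ : ℝ) - (x : ℝ)) / s)
  else 1 - (1 / (Real.exp (1/s) + 1)) * Real.exp (-((x : ℝ) - (μ : ℝ)) / s)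

/-- Probability mass function of the censored discrete Laplace distribution
`CensoredDiscreteLaplace(μ, s, ℓ, u)`, i.e. of `Y = max(ℓ, min(Z, u))` where `Z` is
discrete Laplace with shift `μ` and scale `s`. -/
noncomputable def cdLapPMF (μ : ℤ) (s : ℝ) (ℓ u : ℤ) (k : ℤ) : ℝ :=
  if k = ℓ then dLapCDF μ s ℓ
  else if k = u then 1 - dLapCDF μ s (u - 1)
  else if ℓ < k ∧ k < u then dLapPMF μ s k
  else 0

lemma cdl_upper (μ u : ℤ) (s : ℝ) (hs : 0 < s) (h : μ ≤ u) :
    1 - dLapCDF μ s (u - 1) =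
      (Real.exp (1/s) / (Real.exp (1/s) + 1)) * Real.exp (-((u : ℝ) - (μ : ℝ)) / s) := by
  have ha := Real.exp_pos (1/s)
  have hne : Real.exp (1/s) + 1 ≠ 0 := by positivity
  unfold dLapCDF
  split_ifs with h1
  · have h2 : μ = u ∨ μ = u - 1 := by omega
    rcases h2 with rfl | rfl
    · have e1 : -((μ : ℝ) - ((μ - 1 : ℤ) : ℝ)) / s = -(1/s) := by push_cast; ring
      have e2 : -((μ : ℝ) - (μ : ℝ)) / s = 0 := by ring
      rw [e1, e2, Real.exp_neg, Real.exp_zero]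
      field_simp
      ring
    · have e1 : -(((u - 1 : ℤ) : ℝ) - ((u - 1 : ℤ) : ℝ)) / s = 0 := by ring
      have e2 : -((u : ℝ) - ((u - 1 : ℤ) : ℝ)) / s = -(1/s) := by push_cast; ring
      rw [e1, e2, Real.exp_neg, Real.exp_zero]
      field_simp
      ring
  · have e1 : -(((u - 1 : ℤ) : ℝ) - (μ : ℝ)) / s = 1/s + -((u : ℝ) - (μ : ℝ)) / s := by
      push_cast; ring
    rw [e1, Real.exp_add]
    ring

lemma cdl_exp_le (c x y s ε : ℝ) (hc : 0 ≤ c) (hs : 0 < s) (h : y - x ≤ ε * s) :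
    c * Real.exp (-x / s) ≤ Real.exp ε * (c * Real.exp (-y / s)) := by
  have : Real.exp (-x / s) ≤ Real.exp ε * Real.exp (-y / s) := by
    rw [← Real.exp_add, Real.exp_le_exp]
    have h3 : (y - x) / s ≤ ε := (div_le_iff₀ hs).2 h
    have h4 : (y - x) / s = -x / s - -y / s := by ring
    linarith
  calc _ ≤ c * (Real.exp ε * Real.exp (-y / s)) := mul_le_mul_of_nonneg_left this hc
    _ = _ := by ring

lemma cdl_point (μ μ' ℓ u k : ℤ) (s ε : ℝ) (hs : 0 < s)
    (hμℓ : ℓ ≤ μ) (hμu : μ ≤ u) (hμ'ℓ : ℓ ≤ μ') (hμ'u : μ' ≤ u)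
    (h : |(μ : ℝ) - μ'| ≤ ε * s) :
    cdLapPMF μ s ℓ u k ≤ Real.exp ε * cdLapPMF μ' s ℓ u k := by
  have ha : 1 ≤ Real.exp (1/s) := Real.one_le_exp (by positivity)
  obtain ⟨h1, h2⟩ := abs_le.1 h
  unfold cdLapPMF
  split_ifs with c1 c2 c3
  · unfold dLapCDF
    rw [if_pos hμℓ, if_pos hμ'ℓ]
    exact cdl_exp_le _ _ _ _ _ (by positivity) hs (by linarith)
  · rw [cdl_upper _ _ _ hs hμu, cdl_upper _ _ _ hs hμ'u]
    exact cdl_exp_le _ _ _ _ _ (by positivity) hs (by linarith)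
  · unfold dLapPMF
    refine cdl_exp_le _ _ _ _ _ (div_nonneg (by linarith) (by positivity)) hs ?_
    have := abs_sub_abs_le_abs_sub ((k : ℝ) - μ') ((k : ℝ) - μ)
    have e : (k : ℝ) - μ' - (k - μ) = μ - μ' := by ring
    rw [e] at this
    linarith
  · simp

lemma cdl_summable (μ ℓ u : ℤ) (s : ℝ) (hℓu : ℓ ≤ u) (S : Set ℤ) :
    Summable (S.indicator (cdLapPMF μ s ℓ u)) := by
  refine summable_of_ne_finset_zero (s := Finset.Icc ℓ u) fun k hk => ?_
  rw [Finset.mem_Icc] at hk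
  refine Set.indicator_apply_eq_zero.2 fun _ => ?_
  unfold cdLapPMF
  rw [if_neg (by omega), if_neg (by omega), if_neg (by omega)]

/-- The censored discrete Laplace mechanism applied to an integer-valued statistic of
global sensitivity `Δ`, with scale `s = Δ/ε`, is `ε`-differentially private. -/
theorem censored_discrete_laplace_is_DP
    (ε : ℝ) (hε : 0 < ε) (Δ : ℤ) (hΔ : 0 < Δ)
    (ℓ u : ℤ) (hℓu : ℓ ≤ u)
    (μ μ' : ℤ) (hμℓ : ℓ ≤ μ) (hμu : μ ≤ u) (hμ'ℓ : ℓ ≤ μ') (hμ'u : μ' ≤ u)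
    (hsens : |μ - μ'| ≤ Δ) (S : Set ℤ) :
    (∑' k : ℤ, S.indicator (cdLapPMF μ ((Δ : ℝ) / ε) ℓ u) k)
      ≤ Real.exp ε * ∑' k : ℤ, S.indicator (cdLapPMF μ' ((Δ : ℝ) / ε) ℓ u) k := by
  have hΔ' : (0 : ℝ) < Δ := by exact_mod_cast hΔ
  have hs : 0 < (Δ : ℝ) / ε := by positivity
  have h : |(μ : ℝ) - μ'| ≤ ε * ((Δ : ℝ) / ε) := by
    rw [mul_div_cancel₀ _ hε.ne']
    exact_mod_cast hsens
  rw [← tsum_mul_left]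
  refine Summable.tsum_le_tsum (fun k => ?_) (cdl_summable _ _ _ _ hℓu S)
    ((cdl_summable _ _ _ _ hℓu S).mul_left _)
  by_cases hk : k ∈ S
  · simp only [Set.indicator_of_mem hk]
    exact cdl_point _ _ _ _ _ _ _ hs hμℓ hμu hμ'ℓ hμ'u h
  · simp [Set.indicator_of_notMem hk]
end

section
/- Let ε > 0, let 0 < β < 1, and let m be a positive integer with m ≥ (2/ε) · ln(1/β). If Y ~ CensoredDiscreteLaplace(μ = m, s = 1/ε, ℓ = 0, u = m), then Pr[Y < m/2] ≤ e^{−mε/2} ≤ β. -/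
theorem cdLap_partial (ε : ℝ) (m : ℕ) (j : ℕ) (hj : j < m) :
    ∑ k ∈ Finset.range (j+1), cdLapPMF (m : ℤ) (1 / ε) 0 (m : ℤ) (k : ℤ)
      = (Real.exp ε / (Real.exp ε + 1)) * Real.exp (-((m : ℝ) - j) * ε) := by
  induction j with
  | zero => simp [cdLapPMF, dLapCDF]
  | succ j ih =>
    rw [Finset.sum_range_succ, ih (by omega)]
    have h1 : ¬ (((j+1 : ℕ) : ℤ) = 0) := by omega
    have h2 : ¬ (((j+1 : ℕ) : ℤ) = (m : ℤ)) := by omega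
    have h3 : (0 : ℤ) < ((j+1 : ℕ) : ℤ) ∧ ((j+1 : ℕ) : ℤ) < (m : ℤ) := by omega
    have h4 : (((j+1 : ℕ) : ℤ) : ℝ) - ((m : ℤ) : ℝ) ≤ 0 := by
      rw [sub_nonpos]; exact_mod_cast h3.2.le
    unfold cdLapPMF
    rw [if_neg h1, if_neg h2, if_pos h3, dLapPMF, abs_of_nonpos h4]
    have e1 : -(-((((j+1 : ℕ) : ℤ) : ℝ) - ((m : ℤ) : ℝ))) / (1 / ε)
        = -((m : ℝ) - j) * ε + ε := by
      push_cast
      rw [div_div_eq_mul_div]; ring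
    have e2 : -((m : ℝ) - ((j + 1 : ℕ) : ℝ)) * ε = -((m : ℝ) - j) * ε + ε := by
      push_cast; ring
    rw [e1, e2, Real.exp_add, one_div_one_div]
    have := Real.exp_pos ε
    field_simp
    ring

/-- If `m ≥ (2/ε)·ln(1/β)` and `Y ~ CensoredDiscreteLaplace(μ = m, s = 1/ε, ℓ = 0, u = m)`,
then `Pr[Y < m/2] ≤ e^{-mε/2} ≤ β`. -/
theorem censored_discrete_laplace_lower_tail
    (ε β : ℝ) (hε : 0 < ε) (hβ0 : 0 < β) (hβ1 : β < 1)
    (m : ℕ) (hm : 1 ≤ m) (hmβ : (2 / ε) * Real.log (1 / β) ≤ (m : ℝ)) :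
    (∑' k : ℤ, Set.indicator {k : ℤ | (k : ℝ) < (m : ℝ) / 2}
        (cdLapPMF (m : ℤ) (1 / ε) 0 (m : ℤ)) k)
      ≤ Real.exp (-((m : ℝ) * ε) / 2) ∧ Real.exp (-((m : ℝ) * ε) / 2) ≤ β := by
  constructor
  · obtain ⟨j, hj1, hj2⟩ : ∃ j : ℕ, 2 * j < m ∧ m ≤ 2 * (j + 1) :=
      ⟨(m - 1) / 2, by omega, by omega⟩
    have hlt : ∀ k : ℤ, ((k : ℝ) < (m : ℝ) / 2) ↔ 2 * k < m := by
      intro k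
      rw [lt_div_iff₀ (by norm_num)]
      constructor
      · intro h
        have : k * 2 < (m : ℤ) := by exact_mod_cast h
        omega
      · intro h
        have : k * 2 < (m : ℤ) := by omega
        exact_mod_cast this
    rw [tsum_eq_sum (s := (Finset.range (j+1)).map Nat.castEmbedding)]
    · rw [Finset.sum_map]
      have : ∀ k ∈ Finset.range (j+1), Set.indicator {k : ℤ | (k : ℝ) < (m : ℝ) / 2}
          (cdLapPMF (m : ℤ) (1 / ε) 0 (m : ℤ)) (Nat.castEmbedding k)
          = cdLapPMF (m : ℤ) (1 / ε) 0 (m : ℤ) (k : ℤ) := by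
        intro k hk
        rw [Finset.mem_range] at hk
        rw [Set.indicator_of_mem]
        · rfl
        · rw [Set.mem_setOf_eq, hlt, Nat.castEmbedding_apply]
          omega
      rw [Finset.sum_congr rfl this, cdLap_partial ε m j (by omega)]
      have hp := Real.exp_pos ε
      have h1 : Real.exp ε / (Real.exp ε + 1) ≤ 1 := by
        rw [div_le_one (by positivity)]; linarith
      refine (mul_le_of_le_one_left (Real.exp_pos _).le h1).trans ?_
      apply Real.exp_le_exp.mpr
      have : (2 * j : ℝ) ≤ m := by exact_mod_cast hj1.le
      nlinarith
    · intro k hk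
      by_cases hm2 : (k : ℝ) < (m : ℝ) / 2
      · rw [Set.indicator_of_mem (by exact hm2)]
        rw [hlt] at hm2
        have hneg : k < 0 := by
          by_contra hc
          apply hk
          rw [Finset.mem_map]
          exact ⟨k.toNat, by rw [Finset.mem_range]; omega,
            by rw [Nat.castEmbedding_apply]; omega⟩
        unfold cdLapPMF
        rw [if_neg (by omega), if_neg (by omega), if_neg (by omega)]
      · exact Set.indicator_of_notMem (by exact hm2) _
  · rw [← Real.le_log_iff_exp_le hβ0]
    rw [one_div, Real.log_inv, div_mul_eq_mul_div, div_le_iff₀ hε] at hmβ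
    linarith
end

section
/- Fix integers k ≥ 2 and c ≥ 2. For every integer n ≥ 0 and every integer y ≥ 0, the adaptive-sampler mass functions satisfy f_{(n,c)}(y) ≤ ((k+1)/(k−1))^{2c} · f_{(n+1,c)}(y) and f_{(n+1,c)}(y) ≤ ((k+1)/(k−1))^{2c} · f_{(n,c)}(y). Equivalently, the output of the adaptive sampler on inputs of length n is ε-differentially private with respect to insertion or deletion of one record, with ε = 2c · ln((k+1)/(k−1)). -/
/-- Success probability of flip `i+1` of the adaptive sampler: `p_n(j) = 1/(max(n-j,0)+k)^c`
(natural subtraction truncates at zero). -/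
noncomputable def pAdapt (k c n j : ℕ) : ℝ := 1 / (((n - j + k : ℕ) : ℝ)) ^ c

/-- Geometric PMF `Geom_q(i) = (1-q)^{i-1}·q` for `i ≥ 1`. -/
noncomputable def geomPMF (q : ℝ) (i : ℕ) : ℝ := (1 - q) ^ (i - 1) * q

/-- The adaptive-sampler output distribution `f_{(n,c)}` on ℕ:
`f_{(n,c)}(i) = p_n(i)·∏_{j=0}^{i-1}(1 - p_n(j))` for `i ≤ n`, and
`f_{(n,c)}(i) = Geom_{1/k^c}(i-n)·∏_{j=0}^{n-1}(1 - p_n(j))` for `i > n`. -/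
noncomputable def fAdapt (k c n i : ℕ) : ℝ :=
  if i ≤ n then pAdapt k c n i * ∏ j ∈ Finset.range i, (1 - pAdapt k c n j)
  else geomPMF (1 / (k : ℝ) ^ c) (i - n) * ∏ j ∈ Finset.range n, (1 - pAdapt k c n j)

lemma pA_pos (k c n j : ℕ) (hk : 2 ≤ k) : 0 < pAdapt k c n j := by
  unfold pAdapt
  have : 0 < n - j + k := by omega
  positivity

lemma pA_anti (k c n j n' j' : ℕ) (hk : 2 ≤ k) (h : n - j ≤ n' - j') :
    pAdapt k c n' j' ≤ pAdapt k c n j := by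
  unfold pAdapt
  have h0 : 0 < n - j + k := by omega
  have h1 : ((n - j + k : ℕ) : ℝ) ≤ ((n' - j' + k : ℕ) : ℝ) := by
    exact_mod_cast Nat.add_le_add_right h k
  have h2 : (0 : ℝ) < ((n - j + k : ℕ) : ℝ) := by exact_mod_cast h0
  gcongr

lemma pA_le (k c n j : ℕ) (hk : 2 ≤ k) (hc : 2 ≤ c) : pAdapt k c n j ≤ 1 / (k : ℝ) := by
  have hk' : (2 : ℝ) ≤ k := by exact_mod_cast hk
  refine (pA_anti k c 0 0 n j hk (by simp)).trans ?_
  unfold pAdapt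
  simp only [Nat.sub_self, Nat.zero_add]
  apply one_div_le_one_div_of_le (by linarith)
  exact le_self_pow₀ (by linarith) (by omega)

lemma C_ge (k c : ℕ) (hk : 2 ≤ k) (hc : 2 ≤ c) :
    (((k : ℝ) + 1) / k) ^ c ≤ (((k : ℝ) + 1) / ((k : ℝ) - 1)) ^ (2 * c) := by
  have hk' : (2 : ℝ) ≤ k := by exact_mod_cast hk
  have h1 : ((k : ℝ) + 1) / k ≤ ((k : ℝ) + 1) / ((k : ℝ) - 1) :=
    div_le_div_of_nonneg_left (by linarith) (by linarith) (by linarith)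
  have h2 : 1 ≤ ((k : ℝ) + 1) / ((k : ℝ) - 1) := by
    rw [le_div_iff₀ (by linarith)]; linarith
  calc _ ≤ (((k : ℝ) + 1) / ((k : ℝ) - 1)) ^ c := by gcongr
    _ ≤ _ := pow_le_pow_right₀ h2 (by omega)

lemma C_ge' (k c : ℕ) (hk : 2 ≤ k) (hc : 2 ≤ c) :
    (k : ℝ) / (k - 1) ≤ (((k : ℝ) + 1) / ((k : ℝ) - 1)) ^ (2 * c) := by
  have hk' : (2 : ℝ) ≤ k := by exact_mod_cast hk
  have h2 : 1 ≤ ((k : ℝ) + 1) / ((k : ℝ) - 1) := by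
    rw [le_div_iff₀ (by linarith)]; linarith
  calc (k : ℝ) / (k - 1) ≤ ((k : ℝ) + 1) / ((k : ℝ) - 1) :=
        div_le_div_of_nonneg_right (by linarith) (by linarith)
    _ ≤ _ := le_self_pow₀ h2 (by omega)

lemma C_mul (k c n j : ℕ) (hk : 2 ≤ k) (hc : 2 ≤ c) :
    1 ≤ (((k : ℝ) + 1) / ((k : ℝ) - 1)) ^ (2 * c) * (1 - pAdapt k c n j) := by
  have hk' : (2 : ℝ) ≤ k := by exact_mod_cast hk
  have h := pA_le k c n j hk hc
  have h1 : (1 : ℝ) / k ≤ 1 := by rw [div_le_one (by linarith)]; linarith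
  have hne : (k : ℝ) - 1 ≠ 0 := by linarith
  have hne' : (k : ℝ) ≠ 0 := by linarith
  calc (1 : ℝ) = (k : ℝ) / (k - 1) * (1 - 1 / k) := by field_simp
    _ ≤ _ := mul_le_mul (C_ge' k c hk hc) (by linarith) (by linarith) (le_trans (by positivity) (C_ge k c hk hc))

lemma pA_ratio (k c n i : ℕ) (hk : 2 ≤ k) (hc : 2 ≤ c) :
    pAdapt k c n i ≤ (((k : ℝ) + 1) / ((k : ℝ) - 1)) ^ (2 * c) * pAdapt k c (n + 1) i := by
  have hk' : (2 : ℝ) ≤ k := by exact_mod_cast hk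
  refine le_trans ?_ (mul_le_mul_of_nonneg_right (C_ge k c hk hc) (pA_pos k c (n+1) i hk).le)
  unfold pAdapt
  have hle : n + 1 - i ≤ n - i + 1 := by omega
  have hx : (((n + 1 - i + k : ℕ)) : ℝ) ≤ ((n - i + k : ℕ) : ℝ) + 1 := by
    exact_mod_cast (by omega : n + 1 - i + k ≤ n - i + k + 1)
  have hy : (k : ℝ) ≤ ((n - i + k : ℕ) : ℝ) := by
    exact_mod_cast (by omega : k ≤ n - i + k)
  have hz : (k : ℝ) ≤ ((n + 1 - i + k : ℕ) : ℝ) := by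
    exact_mod_cast (by omega : k ≤ n + 1 - i + k)
  generalize ((n - i + k : ℕ) : ℝ) = d at *
  generalize ((n + 1 - i + k : ℕ) : ℝ) = e at *
  rw [← one_div_pow, ← one_div_pow, ← mul_pow]
  have hd : 0 < d := by linarith
  have he : 0 < e := by linarith
  have hk0 : (0 : ℝ) < k := by linarith
  refine pow_le_pow_left₀ (by positivity) ?_ c
  rw [div_mul_div_comm, div_le_div_iff₀ hd (by positivity)]
  nlinarith

lemma P_step (k c n i : ℕ) :
    (∏ j ∈ Finset.range i, (1 - pAdapt k c (n+1) j)) * (1 - pAdapt k c (n+1) i)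
      = (∏ j ∈ Finset.range i, (1 - pAdapt k c n j)) * (1 - pAdapt k c (n+1) 0) := by
  rw [← Finset.prod_range_succ, Finset.prod_range_succ']
  congr 1
  refine Finset.prod_congr rfl fun j _ => ?_
  simp [pAdapt]

theorem adaptive_sampler_is_DP (k c : ℕ) (hk : 2 ≤ k) (hc : 2 ≤ c) :
    ∀ n y : ℕ,
      fAdapt k c n y ≤ (((k : ℝ) + 1) / ((k : ℝ) - 1)) ^ (2 * c) * fAdapt k c (n + 1) y ∧
      fAdapt k c (n + 1) y ≤ (((k : ℝ) + 1) / ((k : ℝ) - 1)) ^ (2 * c) * fAdapt k c n y := by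
  intro n y
  have hk' : (2 : ℝ) ≤ k := by exact_mod_cast hk
  have hlt : ∀ n j, 0 < 1 - pAdapt k c n j := fun n j => by
    have := pA_le k c n j hk hc
    have h1 : (1 : ℝ) / k < 1 := by rw [div_lt_one (by linarith)]; linarith
    linarith
  have hP : ∀ n i, 0 < ∏ j ∈ Finset.range i, (1 - pAdapt k c n j) := fun n i =>
    Finset.prod_pos fun j _ => hlt n j
  have hq : pAdapt k c 0 0 = 1 / (k : ℝ) ^ c := by simp [pAdapt]
  have hC := fun n j => C_mul k c n j hk hc
  have hr := pA_ratio k c n y hk hc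
  generalize (((k : ℝ) + 1) / ((k : ℝ) - 1)) ^ (2 * c) = C at *
  have ht := hlt (n+1) 0
  have ht1 : 1 - pAdapt k c (n+1) 0 ≤ 1 := by linarith [pA_pos k c (n+1) 0 hk]
  have hCt := hC (n+1) 0
  have hC0 : 1 ≤ C := by nlinarith
  rcases Nat.lt_trichotomy y (n+1) with h | h | h
  · have h1 : y ≤ n := by omega
    have h2 : y ≤ n + 1 := by omega
    simp only [fAdapt, h1, h2, if_true]
    have hs := P_step k c n y
    have hX := hP n y
    have hY := hP (n+1) y
    have hst := pA_anti k c (n+1) y (n+1) 0 hk (by omega)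
    have hCs := hC (n+1) y
    have hab := pA_anti k c n y (n+1) y hk (by omega)
    have ha := pA_pos k c n y hk
    have hb := pA_pos k c (n+1) y hk
    generalize (∏ j ∈ Finset.range y, (1 - pAdapt k c n j)) = X at *
    generalize (∏ j ∈ Finset.range y, (1 - pAdapt k c (n+1) j)) = Y at *
    generalize pAdapt k c n y = a at *
    generalize pAdapt k c (n+1) y = b at *
    generalize pAdapt k c (n+1) 0 = t at *
    have hXY : X ≤ Y := by
      refine le_of_mul_le_mul_right ?_ ht
      rw [← hs]; exact mul_le_mul_of_nonneg_left (by linarith) hY.le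
    have hYX : Y ≤ C * X := by
      calc Y = Y * 1 := by ring
        _ ≤ Y * (C * (1 - b)) := mul_le_mul_of_nonneg_left hCs hY.le
        _ = C * (X * (1 - t)) := by rw [← hs]; ring
        _ ≤ C * X := by
          refine mul_le_mul_of_nonneg_left ?_ (by linarith)
          nlinarith
    constructor
    · calc a * X ≤ (C * b) * Y := mul_le_mul hr hXY hX.le (by positivity)
        _ = _ := by ring
    · calc b * Y ≤ a * (C * X) := mul_le_mul hab hYX hY.le ha.le
        _ = _ := by ring
  · subst h
    have hs : ∏ j ∈ Finset.range (n+1), (1 - pAdapt k c (n+1) j)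
        = (∏ j ∈ Finset.range n, (1 - pAdapt k c n j)) * (1 - pAdapt k c (n+1) 0) := by
      rw [Finset.prod_range_succ, P_step]
    have hq' : pAdapt k c (n+1) (n+1) = 1 / (k : ℝ) ^ c := by simp [pAdapt]
    have hq0 := pA_pos k c 0 0 hk
    have hX := hP n n
    simp only [fAdapt, geomPMF, le_refl, if_true, hs, hq', ← hq]
    simp only [Nat.not_succ_le_self, if_false, Nat.add_sub_cancel_left, Nat.sub_self, pow_zero]
    generalize (∏ j ∈ Finset.range n, (1 - pAdapt k c n j)) = X at *
    generalize pAdapt k c 0 0 = q at *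
    generalize pAdapt k c (n+1) 0 = t at *
    have hqX : 0 < q * X := by positivity
    constructor
    · nlinarith [mul_le_mul_of_nonneg_left hCt hqX.le]
    · nlinarith [mul_le_mul_of_nonneg_left ht1 hqX.le, mul_le_mul_of_nonneg_left hC0 hqX.le]
  · obtain ⟨m, rfl⟩ : ∃ m, y = n + 1 + (m + 1) := ⟨y - n - 2, by omega⟩
    have hs : ∏ j ∈ Finset.range (n+1), (1 - pAdapt k c (n+1) j)
        = (∏ j ∈ Finset.range n, (1 - pAdapt k c n j)) * (1 - pAdapt k c (n+1) 0) := by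
      rw [Finset.prod_range_succ, P_step]
    have hq0 := pA_pos k c 0 0 hk
    have hX := hP n n
    have hCq := hC 0 0
    have h1q := hlt 0 0
    have hqt := pA_anti k c 0 0 (n+1) 0 hk (by omega)
    have e1 : ¬ (n + 1 + (m + 1) ≤ n) := by omega
    have e2 : ¬ (n + 1 + (m + 1) ≤ n + 1) := by omega
    have e3 : n + 1 + (m + 1) - n - 1 = m + 1 := by omega
    have e4 : n + 1 + (m + 1) - (n + 1) - 1 = m := by omega
    simp only [fAdapt, geomPMF, e1, e2, if_false, hs, e3, e4, ← hq]
    generalize (∏ j ∈ Finset.range n, (1 - pAdapt k c n j)) = X at *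
    generalize pAdapt k c 0 0 = q at *
    generalize pAdapt k c (n+1) 0 = t at *
    have hZ : 0 < (1 - q) ^ m * q * X := by positivity
    rw [pow_succ]
    generalize hZZ : (1 - q) ^ m = Z at *
    constructor
    · have : (1 - q) ≤ C * (1 - t) := by linarith
      nlinarith [mul_le_mul_of_nonneg_left this hZ.le]
    · have : (1 - t) ≤ C * (1 - q) := by linarith
      nlinarith [mul_le_mul_of_nonneg_left this hZ.le]
end

section
/- Fix integers k ≥ 2 and c ≥ 2. For every integer n ≥ 1, the adaptive-sampler output Ŷ distributed according to f_{(n,c)} satisfies Pr[Ŷ < n/2] ≤ n/(n/2 + k)^c; in particular Pr[Ŷ < n/2] = O(1/n^{c−1}) as n → ∞. -/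
/-- Lower-tail bound for the adaptive sampler: `Pr[Ŷ < n/2] ≤ n/(n/2 + k)^c`; in particular
`Pr[Ŷ < n/2] = O(1/n^{c-1})` as `n → ∞`. -/
theorem adaptive_sampler_lower_tail (k c : ℕ) (hk : 2 ≤ k) (hc : 2 ≤ c) :
    (∀ n : ℕ, 1 ≤ n →
      (∑' i : ℕ, Set.indicator {i : ℕ | (i : ℝ) < (n : ℝ) / 2} (fAdapt k c n) i)
        ≤ (n : ℝ) / ((n : ℝ) / 2 + (k : ℝ)) ^ c) ∧
    ∃ C : ℝ, 0 < C ∧ ∀ n : ℕ, 1 ≤ n →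
      (∑' i : ℕ, Set.indicator {i : ℕ | (i : ℝ) < (n : ℝ) / 2} (fAdapt k c n) i)
        ≤ C / (n : ℝ) ^ (c - 1) := by
  have key : ∀ n : ℕ, 1 ≤ n →
      (∑' i : ℕ, Set.indicator {i : ℕ | (i : ℝ) < (n : ℝ) / 2} (fAdapt k c n) i)
        ≤ (n : ℝ) / ((n : ℝ) / 2 + (k : ℝ)) ^ c := by
    intro n hn
    have hn' : (1 : ℝ) ≤ n := by exact_mod_cast hn
    have hk' : (2 : ℝ) ≤ k := by exact_mod_cast hk
    rw [tsum_eq_sum (s := Finset.range n)]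
    · have hb : ∀ i ∈ Finset.range n,
          Set.indicator {i : ℕ | (i : ℝ) < (n : ℝ) / 2} (fAdapt k c n) i
            ≤ 1 / ((n : ℝ) / 2 + (k : ℝ)) ^ c := by
        intro i hi
        have hi' := Finset.mem_range.mp hi
        by_cases h : (i : ℝ) < (n : ℝ) / 2
        · rw [Set.indicator_of_mem (by exact h)]
          unfold fAdapt
          rw [if_pos hi'.le]
          have hp0 : ∀ j, 0 ≤ pAdapt k c n j := by
            intro j; unfold pAdapt; positivity
          have hp1 : ∀ j, pAdapt k c n j ≤ 1 := by
            intro j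
            unfold pAdapt
            have h1 : (1 : ℝ) ≤ ((n - j + k : ℕ) : ℝ) := by
              exact_mod_cast (by omega : 1 ≤ n - j + k)
            exact div_le_one_of_le₀ (one_le_pow₀ h1) (by positivity)
          have hprod : ∏ j ∈ Finset.range i, (1 - pAdapt k c n j) ≤ 1 :=
            Finset.prod_le_one (fun j _ => by linarith [hp1 j]) (fun j _ => by linarith [hp0 j])
          refine (mul_le_of_le_one_right (hp0 i) hprod).trans ?_
          unfold pAdapt
          have hle : (n : ℝ) / 2 + k ≤ ((n - i + k : ℕ) : ℝ) := by
            rw [Nat.cast_add, Nat.cast_sub hi'.le]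
            linarith
          exact one_div_le_one_div_of_le (by positivity) (pow_le_pow_left₀ (by positivity) hle c)
        · rw [Set.indicator_of_notMem (by exact h)]
          positivity
      refine (Finset.sum_le_sum hb).trans (le_of_eq ?_)
      rw [Finset.sum_const, Finset.card_range, nsmul_eq_mul, mul_one_div]
    · intro i hi
      apply Set.indicator_of_notMem
      have h1 : (n : ℝ) ≤ i := by
        exact_mod_cast (by simpa using hi : n ≤ i)
      simp only [Set.mem_setOf_eq, not_lt]
      linarith
  refine ⟨key, 2 ^ c, by positivity, fun n hn => (key n hn).trans ?_⟩
  have hn' : (0 : ℝ) < n := by exact_mod_cast hn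
  have h1 : (n : ℝ) / ((n : ℝ) / 2 + (k : ℝ)) ^ c ≤ (n : ℝ) / ((n : ℝ) / 2) ^ c := by
    apply div_le_div_of_nonneg_left hn'.le (by positivity)
    apply pow_le_pow_left₀ (by positivity)
    have : (0 : ℝ) ≤ k := by positivity
    linarith
  refine h1.trans (le_of_eq ?_)
  obtain ⟨d, rfl⟩ : ∃ d, c = d + 1 := ⟨c - 1, by omega⟩
  rw [Nat.add_sub_cancel, div_pow]
  field_simp
  ring
end

section
/- Fix integers k ≥ 2 and c ≥ 2. For every integer n ≥ 1, the adaptive-sampler output Ŷ distributed according to f_{(n,c)} satisfies Pr[Ŷ > 2n] ≤ (1 − 1/k^c)^n. -/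
/-- Upper-tail bound for the adaptive sampler: `Pr[Ŷ > 2n] ≤ (1 - 1/k^c)^n`. -/
theorem adaptive_sampler_upper_tail (k c : ℕ) (hk : 2 ≤ k) (hc : 2 ≤ c) :
    ∀ n : ℕ, 1 ≤ n →
      (∑' i : ℕ, Set.indicator {i : ℕ | 2 * n < i} (fAdapt k c n) i)
        ≤ (1 - 1 / (k : ℝ) ^ c) ^ n := by
  intro n hn
  have hp : ∀ j, 0 ≤ pAdapt k c n j ∧ pAdapt k c n j ≤ 1 := by
    intro j
    have h1 : (1 : ℝ) ≤ ((n - j + k : ℕ) : ℝ) := by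
      exact_mod_cast (by omega : 1 ≤ n - j + k)
    have h2 := one_le_pow₀ h1 (n := c)
    unfold pAdapt
    exact ⟨by positivity, by rw [div_le_one (by positivity)]; exact h2⟩
  have hk1 : (1 : ℝ) < (k : ℝ) := by exact_mod_cast (by omega : 1 < k)
  have hkc : (1 : ℝ) < (k : ℝ) ^ c := one_lt_pow₀ hk1 (by omega)
  have hq0 : 0 < 1 / (k : ℝ) ^ c := by positivity
  have hq1 : 1 / (k : ℝ) ^ c < 1 := by rw [div_lt_one (by positivity)]; exact hkc
  have hP : ∏ j ∈ Finset.range n, (1 - pAdapt k c n j) ≤ 1 :=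
    Finset.prod_le_one (fun j _ => by linarith [(hp j).2]) (fun j _ => by linarith [(hp j).1])
  have hf : ∀ i, fAdapt k c n (i + (2 * n + 1)) =
      (1 - 1 / (k : ℝ) ^ c) ^ i * ((1 - 1 / (k : ℝ) ^ c) ^ n * (1 / (k : ℝ) ^ c) *
        ∏ j ∈ Finset.range n, (1 - pAdapt k c n j)) := by
    intro i
    unfold fAdapt geomPMF
    rw [if_neg (by omega), show i + (2 * n + 1) - n - 1 = i + n by omega, pow_add]
    ring
  generalize ∏ j ∈ Finset.range n, (1 - pAdapt k c n j) = P at hP hf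
  generalize 1 / (k : ℝ) ^ c = q at *
  have hg := (hasSum_geometric_of_lt_one (r := 1 - q) (by linarith) (by linarith)).mul_right
    ((1 - q) ^ n * q * P)
  have hinj : Function.Injective (fun i : ℕ => i + (2 * n + 1)) := add_left_injective _
  have hs : HasSum (fun i => Set.indicator {i : ℕ | 2 * n < i} (fAdapt k c n) i)
      ((1 - (1 - q))⁻¹ * ((1 - q) ^ n * q * P)) := by
    rw [← hinj.hasSum_iff]
    · have he : ((fun i => Set.indicator {i : ℕ | 2 * n < i} (fAdapt k c n) i) ∘
          fun i : ℕ => i + (2 * n + 1)) = fun i => (1 - q) ^ i * ((1 - q) ^ n * q * P) := by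
        funext i
        rw [← hf i]
        exact Set.indicator_of_mem (show 2 * n < i + (2 * n + 1) by omega) _
      rw [he]
      exact hg
    · intro x hx
      apply Set.indicator_of_notMem
      intro h
      have h' : 2 * n < x := h
      exact hx ⟨x - (2 * n + 1), by simp only []; omega⟩
  rw [hs.tsum_eq]
  have : (1 - (1 - q))⁻¹ * ((1 - q) ^ n * q * P) = (1 - q) ^ n * P := by
    rw [sub_sub_cancel]; field_simp
  rw [this]
  exact mul_le_of_le_one_right (pow_nonneg (by linarith) n) hP
end

section
/- Fix integers ℓ < μ < u with u − ℓ ≥ 3 (so the support {ℓ, ℓ+1, …, u} contains at least four points) and a real scale s > 0. Let Y be the censored discrete Laplace random variable CensoredDiscreteLaplace(μ, s, ℓ, u). Then there exists an integer k with ℓ ≤ k ≤ u such that Pr[Y = k] is not a dyadic rational; that is, at least one output mass is not of the form t/2^N with t, N nonnegative integers. -/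
/-- A real number is dyadic if it equals `t/2^N` for some nonnegative integers `t` and `N`. -/
def IsDyadic (x : ℝ) : Prop := ∃ t N : ℕ, x = (t : ℝ) / 2 ^ N

lemma dyadic_aux (x y : ℝ) (hx0 : 0 < x) (hx1 : x < 1) (h : y * (1 + x) = x * (1 - x))
    (hx : IsDyadic x) (hy : IsDyadic y) : False := by
  obtain ⟨t, N, rfl⟩ := hx
  obtain ⟨r, M, rfl⟩ := hy
  have ht : t ≠ 0 := by
    rintro rfl
    simp at hx0
  obtain ⟨e, m, hm, rfl⟩ := Nat.exists_eq_two_pow_mul_odd ht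
  have hlt : 2 ^ e * m < 2 ^ N := by
    rw [div_lt_one (by positivity)] at hx1
    exact_mod_cast hx1
  have heN : e < N := by
    by_contra hc
    have h1 : 2 ^ N ≤ 2 ^ e := Nat.pow_le_pow_right (by norm_num) (by omega)
    have h2 : 0 < m := hm.pos
    have h3 : 2 ^ e ≤ 2 ^ e * m := Nat.le_mul_of_pos_right _ h2
    omega
  obtain ⟨K, rfl⟩ := Nat.exists_eq_add_of_lt heN
  have hc : ((2 ^ e * m : ℕ) : ℝ) / 2 ^ (e + K + 1) = (m : ℝ) / 2 ^ (K + 1) := by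
    push_cast
    rw [add_assoc, pow_add 2 e, mul_div_mul_left _ _ (by positivity)]
  rw [hc] at h
  have key : (2 ^ (K + 1) + m) * (r * 2 ^ (K + 1) + 2 ^ M * m) = 2 ^ (M + K + 2) * m := by
    have hA : (2 : ℝ) ^ (K + 1) ≠ 0 := by positivity
    have hB : (2 : ℝ) ^ M ≠ 0 := by positivity
    have hP : (2 : ℝ) ^ (M + K + 2) = 2 * 2 ^ M * 2 ^ (K + 1) := by ring
    have : ((2 : ℝ) ^ (K + 1) + m) * (r * 2 ^ (K + 1) + 2 ^ M * m) = 2 ^ (M + K + 2) * m := by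
      rw [hP]
      generalize (2 : ℝ) ^ (K + 1) = A at *
      generalize (2 : ℝ) ^ M = B at *
      field_simp at h
      linear_combination h
    exact_mod_cast this
  have hd : (2 ^ (K + 1) + m) ∣ 2 ^ (M + K + 2) * m := ⟨_, key.symm⟩
  have hodd : Odd (2 ^ (K + 1) + m) :=
    Even.add_odd ((even_two).pow_of_ne_zero (by omega)) hm
  have c1 : Nat.Coprime (2 ^ (K + 1) + m) (2 ^ (M + K + 2)) :=
    Nat.Coprime.pow_right _ (Nat.coprime_two_right.mpr hodd)
  have c2 : Nat.Coprime (2 ^ (K + 1) + m) m := by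
    rw [Nat.coprime_add_self_left]
    exact Nat.Coprime.pow_left _ (Nat.coprime_two_left.mpr hm)
  have h1 := Nat.eq_one_of_dvd_coprimes (c1.mul_right c2) dvd_rfl hd
  have h2 : 0 < m := hm.pos
  have h3 : 0 < 2 ^ (K + 1) := by positivity
  omega

/-- No fully-dyadic censored discrete Laplace: if the support `{ℓ, …, u}` has at least four
points, some output mass of `CensoredDiscreteLaplace(μ, s, ℓ, u)` is not a dyadic rational. -/
theorem no_fully_dyadic_censored_discrete_laplace
    (ℓ μ u : ℤ) (s : ℝ) (hs : 0 < s) (hℓμ : ℓ < μ) (hμu : μ < u) (hsupp : 3 ≤ u - ℓ) :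
    ∃ k : ℤ, ℓ ≤ k ∧ k ≤ u ∧ ¬ IsDyadic (cdLapPMF μ s ℓ u k) := by
  by_contra hcon
  push Not at hcon
  have hE : 1 < Real.exp (1 / s) := Real.one_lt_exp_iff.mpr (by positivity)
  have h0 : IsDyadic ((Real.exp (1/s) - 1) / (Real.exp (1/s) + 1)) := by
    have := hcon μ hℓμ.le hμu.le
    rw [cdLapPMF, if_neg hℓμ.ne', if_neg hμu.ne, if_pos ⟨hℓμ, hμu⟩, dLapPMF] at this
    simpa using this
  have h1 : IsDyadic ((Real.exp (1/s) - 1) / (Real.exp (1/s) + 1) * (Real.exp (1/s))⁻¹) := by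
    rw [← Real.exp_neg]
    by_cases hc : μ + 1 < u
    · have := hcon (μ + 1) (by omega) (by omega)
      rw [cdLapPMF, if_neg (by omega), if_neg (by omega), if_pos ⟨by omega, by omega⟩,
        dLapPMF] at this
      simpa [neg_div] using this
    · have := hcon (μ - 1) (by omega) (by omega)
      rw [cdLapPMF, if_neg (by omega), if_neg (by omega), if_pos ⟨by omega, by omega⟩,
        dLapPMF] at this
      simpa [neg_div] using this
  refine dyadic_aux _ _ ?_ ?_ ?_ h0 h1
  · exact div_pos (by linarith) (by linarith)
  · rw [div_lt_one (by linarith)]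
    linarith
  · generalize Real.exp (1 / s) = E at *
    have : E ≠ 0 := by linarith
    have : E + 1 ≠ 0 := by linarith
    field_simp
    ring
end

section
/- Let q be a rational number with 0 < q < 1 that is not dyadic (i.e., when written in lowest terms q = r/d, the denominator d has an odd prime factor). Then ((1 − q)/(1 + q)) · q is not a dyadic rational. -/
/-- A rational number is dyadic if it equals `t/2^N` for some nonnegative integers `t` and `N`. -/
def IsDyadicQ (x : ℚ) : Prop := ∃ t N : ℕ, x = (t : ℚ) / 2 ^ N

/-- If `q ∈ (0,1)` is a rational that is not dyadic, then `((1 - q)/(1 + q))·q` is not a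
dyadic rational. -/
theorem adjacent_mass_not_dyadic
    (q : ℚ) (hq0 : 0 < q) (hq1 : q < 1) (hnd : ¬ IsDyadicQ q) :
    ¬ IsDyadicQ (((1 - q) / (1 + q)) * q) := by
  rintro ⟨t, N, h⟩
  apply hnd
  have hd : (0 : ℚ) < (q.den : ℚ) := by exact_mod_cast q.den_pos
  have hq : q = (q.num : ℚ) / (q.den : ℚ) := (Rat.num_div_den q).symm
  have hmul : q * (q.den : ℚ) = (q.num : ℚ) := Rat.mul_den_eq_num q
  have h1 : (1 + q) ≠ 0 := by positivity
  have h2 : (2 : ℚ) ^ N ≠ 0 := by positivity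
  have h3 : (2 : ℚ) ^ N * ((1 - q) * q) = t * (1 + q) := by
    field_simp at h
    linarith
  have h4 : (2 : ℚ) ^ N * (((q.den : ℚ) - q.num) * q.num)
      = q.den * (t * ((q.den : ℚ) + q.num)) := by
    rw [← hmul]
    linear_combination (q.den : ℚ) ^ 2 * h3
  have h5 : (2 : ℤ) ^ N * (((q.den : ℤ) - q.num) * q.num)
      = q.den * (t * ((q.den : ℤ) + q.num)) := by
    exact_mod_cast h4
  have hc : IsCoprime (q.den : ℤ) q.num := by
    rw [Int.isCoprime_iff_nat_coprime]
    simpa using q.reduced.symm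
  have hc2 : IsCoprime (q.den : ℤ) ((q.den : ℤ) - q.num) := by
    obtain ⟨a, b, hab⟩ := hc
    exact ⟨a + b, -b, by linear_combination hab⟩
  have hdvd : (q.den : ℤ) ∣ 2 ^ N :=
    (hc2.mul_right hc).dvd_of_dvd_mul_right ⟨_, h5⟩
  have hdvd' : q.den ∣ 2 ^ N := by exact_mod_cast hdvd
  obtain ⟨k, -, hk⟩ := (Nat.dvd_prime_pow Nat.prime_two).1 hdvd'
  have hn : 0 < q.num := Rat.num_pos.2 hq0
  refine ⟨q.num.toNat, k, ?_⟩
  have e1 : ((q.num.toNat : ℕ) : ℚ) = (q.num : ℚ) := by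
    exact_mod_cast Int.toNat_of_nonneg hn.le
  have e2 : (q.den : ℚ) = 2 ^ k := by exact_mod_cast hk
  rw [e1, ← e2]
  exact hq
end

section
/- Let p ∈ (0,1) and μ ∈ ℤ, and let g_μ and g_{μ+1} be the probability mass functions of the Dyadic Symmetric Geometric distributions DSG(μ, p) and DSG(μ+1, p). Then for every z ∈ ℤ, g_μ(z) ≤ (1/(1−p)) · g_{μ+1}(z) and g_{μ+1}(z) ≤ (1/(1−p)) · g_μ(z); that is, shifting the center by one changes every probability mass by at most a single factor of 1 − p. -/
/-- Probability mass function of the Dyadic Symmetric Geometric distribution `DSG(μ, p)` on ℤ: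
`g_μ(z) = (1/2)·p·(1-p)^{μ-z}` for `z ≤ μ` and `g_μ(z) = (1/2)·p·(1-p)^{z-μ-1}` for `z ≥ μ+1`. -/
noncomputable def dsgPMF (μ : ℤ) (p : ℝ) (z : ℤ) : ℝ :=
  if z ≤ μ then (1 / 2) * p * (1 - p) ^ (μ - z).toNat
  else (1 / 2) * p * (1 - p) ^ (z - μ - 1).toNat

theorem dsg_aux (p : ℝ) (hp0 : 0 < p) (hp1 : p < 1) (m n : ℕ) (h : n ≤ m + 1) :
    (1 / 2) * p * (1 - p) ^ m ≤ (1 / (1 - p)) * ((1 / 2) * p * (1 - p) ^ n) := by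
  have hq : 0 < 1 - p := by linarith
  have h1 : (1 - p) ^ (m + 1) ≤ (1 - p) ^ n :=
    pow_le_pow_of_le_one hq.le (by linarith) h
  rw [one_div_mul_eq_div (1 - p), le_div_iff₀ hq]
  calc (1 / 2) * p * (1 - p) ^ m * (1 - p) = (1 / 2) * p * (1 - p) ^ (m + 1) := by ring
    _ ≤ _ := mul_le_mul_of_nonneg_left h1 (by positivity)

/-- Shifting the center of the Dyadic Symmetric Geometric distribution by one changes every
probability mass by at most a single factor of `1 - p`. -/
theorem dsg_shift_ratio (p : ℝ) (hp0 : 0 < p) (hp1 : p < 1) (μ : ℤ) :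
    ∀ z : ℤ,
      dsgPMF μ p z ≤ (1 / (1 - p)) * dsgPMF (μ + 1) p z ∧
      dsgPMF (μ + 1) p z ≤ (1 / (1 - p)) * dsgPMF μ p z := by
  intro z
  unfold dsgPMF
  constructor <;> split_ifs <;> apply dsg_aux p hp0 hp1 <;> omega
end

section
/- Fix integers ℓ < μ < u with μ + 1 ≤ u, and let p ∈ (0,1). Let Y = max(ℓ, min(Z, u)) where Z ~ DSG(μ, p), and Y′ = max(ℓ, min(Z′, u)) where Z′ ~ DSG(μ+1, p). Then for every integer y with ℓ ≤ y ≤ u, Pr[Y = y] ≤ (1/(1−p)) · Pr[Y′ = y] and Pr[Y′ = y] ≤ (1/(1−p)) · Pr[Y = y]. Hence the censored Dyadic Symmetric Geometric mechanism is ε-differentially private with ε = ln(1/(1−p)) for statistics of sensitivity 1. -/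
/-- Probability mass function of the censored Dyadic Symmetric Geometric distribution, the
distribution of `Y = max(ℓ, min(Z, u))` for `Z ~ DSG(μ, p)`: the mass at `ℓ` is `Pr[Z ≤ ℓ]`,
the mass at `u` is `Pr[Z ≥ u]`, and interior points keep the mass of `Z`. -/
noncomputable def cdsgPMF (μ : ℤ) (p : ℝ) (ℓ u : ℤ) (y : ℤ) : ℝ :=
  if y = ℓ then ∑' z : ℤ, Set.indicator {z : ℤ | z ≤ ℓ} (dsgPMF μ p) z
  else if y = u then ∑' z : ℤ, Set.indicator {z : ℤ | u ≤ z} (dsgPMF μ p) z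
  else if ℓ < y ∧ y < u then dsgPMF μ p y
  else 0

theorem dsg_succ (μ : ℤ) (p : ℝ) (hp0 : 0 < p) (hp1 : p < 1) (z : ℤ) :
    dsgPMF μ p z ≤ (1 / (1 - p)) * dsgPMF (μ + 1) p z ∧
    dsgPMF (μ + 1) p z ≤ (1 / (1 - p)) * dsgPMF μ p z := by
  have hq : 0 < 1 - p := by linarith
  rw [one_div, ← div_eq_inv_mul, ← div_eq_inv_mul, le_div_iff₀ hq, le_div_iff₀ hq]
  rcases lt_trichotomy z (μ + 1) with h | h | h
  · obtain ⟨n, hn⟩ : ∃ n : ℕ, μ - z = n := ⟨(μ - z).toNat, by omega⟩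
    have e1 : (μ - z).toNat = n := by omega
    have e2 : (μ + 1 - z).toNat = n + 1 := by omega
    have a1 : z ≤ μ := by omega
    have a2 : z ≤ μ + 1 := by omega
    simp only [dsgPMF, a1, a2, if_true, e1, e2, pow_succ]
    have : 0 < (1 - p) ^ n := by positivity
    have h3 : 0 < 1 / 2 * p * (1 - p) ^ n := by positivity
    constructor <;> nlinarith [mul_pos h3 hp0, mul_pos h3 hq, mul_pos (mul_pos h3 hq) hp0]
  · subst h
    simp [dsgPMF]
    nlinarith
  · obtain ⟨n, hn⟩ : ∃ n : ℕ, z - μ - 2 = n := ⟨(z - μ - 2).toNat, by omega⟩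
    have e1 : (z - μ - 1).toNat = n + 1 := by omega
    have e2 : (z - (μ + 1) - 1).toNat = n := by omega
    have a1 : ¬ z ≤ μ := by omega
    have a2 : ¬ z ≤ μ + 1 := by omega
    simp only [dsgPMF, a1, a2, if_false, e1, e2, pow_succ]
    have : 0 < (1 - p) ^ n := by positivity
    have h3 : 0 < 1 / 2 * p * (1 - p) ^ n := by positivity
    constructor <;> nlinarith [mul_pos h3 hp0, mul_pos h3 hq, mul_pos (mul_pos h3 hq) hp0]

theorem dsg_summable (μ : ℤ) (p : ℝ) (hp0 : 0 < p) (hp1 : p < 1) :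
    Summable (dsgPMF μ p) := by
  rw [← (Equiv.addRight (μ + 1)).summable_iff]
  have hg : Summable (fun n : ℕ => 1 / 2 * p * (1 - p) ^ n) :=
    (summable_geometric_of_lt_one (by linarith) (by linarith)).mul_left _
  apply Summable.of_nat_of_neg_add_one
  · refine hg.congr fun n => ?_
    have a : ¬ ((n : ℤ) + (μ + 1) ≤ μ) := by omega
    have e : ((n : ℤ) + (μ + 1) - μ - 1).toNat = n := by omega
    simp only [Function.comp, Equiv.coe_addRight, dsgPMF, a, if_false, e]
  · refine hg.congr fun n => ?_
    have a : (-((n : ℤ) + 1) + (μ + 1) ≤ μ) := by omega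
    have e : (μ - (-((n : ℤ) + 1) + (μ + 1))).toNat = n := by omega
    simp only [Function.comp, Equiv.coe_addRight, dsgPMF, a, if_true, e]

theorem tsum_ind_le (f g : ℤ → ℝ) (c : ℝ) (S : Set ℤ) (hf : Summable f) (hg : Summable g)
    (h : ∀ z, f z ≤ c * g z) :
    ∑' z, S.indicator f z ≤ c * ∑' z, S.indicator g z := by
  rw [← tsum_mul_left]
  refine (hf.indicator S).tsum_le_tsum (fun z => ?_) ((hg.indicator S).mul_left c)
  by_cases hz : z ∈ S <;> simp [hz, h]

/-- The censored Dyadic Symmetric Geometric mechanism is `ε`-differentially private with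
`ε = ln(1/(1-p))` for statistics of sensitivity 1: for centers `μ` and `μ+1` within `(ℓ, u)`,
every clamped output mass changes by at most a factor `1/(1-p)`. -/
theorem censored_dsg_is_DP
    (ℓ μ u : ℤ) (hℓμ : ℓ < μ) (hμu : μ < u)
    (p : ℝ) (hp0 : 0 < p) (hp1 : p < 1) :
    ∀ y : ℤ, ℓ ≤ y → y ≤ u →
      cdsgPMF μ p ℓ u y ≤ (1 / (1 - p)) * cdsgPMF (μ + 1) p ℓ u y ∧
      cdsgPMF (μ + 1) p ℓ u y ≤ (1 / (1 - p)) * cdsgPMF μ p ℓ u y := by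
  intro y _ _
  have h := dsg_succ μ p hp0 hp1
  have s1 := dsg_summable μ p hp0 hp1
  have s2 := dsg_summable (μ + 1) p hp0 hp1
  unfold cdsgPMF
  split_ifs
  · exact ⟨tsum_ind_le _ _ _ _ s1 s2 fun z => (h z).1,
      tsum_ind_le _ _ _ _ s2 s1 fun z => (h z).2⟩
  · exact ⟨tsum_ind_le _ _ _ _ s1 s2 fun z => (h z).1,
      tsum_ind_le _ _ _ _ s2 s1 fun z => (h z).2⟩
  · exact h y
  · simp
end
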